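/- arXiv:2001.10950 — 2 statements merged into one kernel-verified Lean document; each statement's English description precedes it below -/
import Mathlib

section
/- Let X be a normed vector space over ℝ or ℂ, let K₁, K₂ : X → X be continuous linear operators with ‖K₁‖ ≤ 1/2 and ‖K₂‖ ≤ 1/2, and let g, f₁, f₂ ∈ X satisfy f_j = g + K_j f_j for j = 1, 2. Then for every L ∈ ℕ, ‖f₂ − f₁‖ ≤ (L+1) · 2^{1−L} · ‖K₂ − K₁‖ · ‖f₂‖ + 2 ‖Σ_{l=0}^{L} (K₂^l − K₁^l) g‖. (This is the abstract form of estimate (est:psidif) in the proof of the paper's Theorem 2.2, where the last term is the data mismatch r_n^L of the a priori measurements.) -/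
/-!
Only the action of the operators on `X` matters, so they are replaced by elements `a₁`, `a₂` of a
seminormed ring acting boundedly. Iterating the fixed point equations gives
`f_j = ∑ l < n, a_j ^ l • g + a_j ^ n • f_j`. Subtract these and split the difference of the
remainders as `(a₂ ^ n - a₁ ^ n) • f₂ + a₁ ^ n • (f₂ - f₁)`: the first term is controlled by
telescoping `a₂ ^ n - a₁ ^ n`, the second is absorbed into the left-hand side since `‖a₁ ^ n‖ < 1`.
-/

open Finset

instance instIsBoundedSMulContinuousLinearMap {𝕜 E : Type*} [NontriviallyNormedField 𝕜]
    [SeminormedAddCommGroup E] [NormedSpace 𝕜 E] : IsBoundedSMul (E →L[𝕜] E) E :=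
  .of_norm_smul_le fun T x ↦ T.le_opNorm x

theorem norm_pow_succ_le_of_norm_le {R : Type*} [SeminormedRing R] {a : R} {q : ℝ}
    (ha : ‖a‖ ≤ q) (n : ℕ) : ‖a ^ (n + 1)‖ ≤ q ^ (n + 1) :=
  (norm_pow_le' a n.succ_pos).trans (by gcongr)

theorem norm_pow_succ_sub_pow_succ_le_of_norm_le {R : Type*} [SeminormedRing R] {a b : R} {q : ℝ}
    (ha : ‖a‖ ≤ q) (hb : ‖b‖ ≤ q) (n : ℕ) :
    ‖a ^ (n + 1) - b ^ (n + 1)‖ ≤ (n + 1) * q ^ n * ‖a - b‖ := by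
  have hq : 0 ≤ q := (norm_nonneg a).trans ha
  induction n with
  | zero => simp
  | succ n ih =>
    have telescope : a ^ (n + 2) - b ^ (n + 2) =
        a ^ (n + 1) * (a - b) + (a ^ (n + 1) - b ^ (n + 1)) * b := by
      rw [pow_succ a (n + 1), pow_succ b (n + 1)]
      noncomm_ring
    calc ‖a ^ (n + 2) - b ^ (n + 2)‖
        ≤ ‖a ^ (n + 1)‖ * ‖a - b‖ + ‖a ^ (n + 1) - b ^ (n + 1)‖ * ‖b‖ := by
          rw [telescope]
          exact norm_add_le_of_le (norm_mul_le _ _) (norm_mul_le _ _)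
      _ ≤ q ^ (n + 1) * ‖a - b‖ + (n + 1) * q ^ n * ‖a - b‖ * q := by
          gcongr
          exact norm_pow_succ_le_of_norm_le ha n
      _ = ((n + 1 : ℕ) + 1) * q ^ (n + 1) * ‖a - b‖ := by
          push_cast
          ring

section FixedPoint

variable {R M : Type*}

theorem sum_pow_smul_of_eq_add_smul [Ring R] [AddCommGroup M] [Module R M] {a : R} {f g : M}
    (h : f = g + a • f) (n : ℕ) : ∑ l ∈ range n, a ^ l • g = f - a ^ n • f := by
  have hg : g = (1 - a) • f := by rw [sub_smul, one_smul, eq_sub_iff_add_eq, ← h]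
  rw [← sum_smul, hg, smul_smul, geom_sum_mul_neg, sub_smul, one_smul]

theorem sub_eq_sum_of_eq_add_smul [Ring R] [AddCommGroup M] [Module R M] {a₁ a₂ : R}
    {f₁ f₂ g : M} (h₁ : f₁ = g + a₁ • f₁) (h₂ : f₂ = g + a₂ • f₂) (n : ℕ) :
    f₂ - f₁ = ∑ l ∈ range n, (a₂ ^ l - a₁ ^ l) • g + (a₂ ^ n - a₁ ^ n) • f₂
      + a₁ ^ n • (f₂ - f₁) := by
  simp only [sub_smul, sum_sub_distrib, sum_pow_smul_of_eq_add_smul h₁,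
    sum_pow_smul_of_eq_add_smul h₂, smul_sub]
  abel

variable [SeminormedRing R] [SeminormedAddCommGroup M] [Module R M] [IsBoundedSMul R M]
  {a₁ a₂ : R} {f₁ f₂ g : M} {q : ℝ}

theorem one_sub_pow_mul_norm_sub_le_of_eq_add_smul (ha₁ : ‖a₁‖ ≤ q) (ha₂ : ‖a₂‖ ≤ q)
    (h₁ : f₁ = g + a₁ • f₁) (h₂ : f₂ = g + a₂ • f₂) (L : ℕ) :
    (1 - q ^ (L + 1)) * ‖f₂ - f₁‖ ≤ (L + 1) * q ^ L * ‖a₂ - a₁‖ * ‖f₂‖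
      + ‖∑ l ∈ range (L + 1), (a₂ ^ l - a₁ ^ l) • g‖ := by
  set S := ∑ l ∈ range (L + 1), (a₂ ^ l - a₁ ^ l) • g
  have hdiff : ‖(a₂ ^ (L + 1) - a₁ ^ (L + 1)) • f₂‖ ≤ (L + 1) * q ^ L * ‖a₂ - a₁‖ * ‖f₂‖ :=
    (norm_smul_le _ _).trans (by gcongr; exact norm_pow_succ_sub_pow_succ_le_of_norm_le ha₂ ha₁ L)
  have hcontr : ‖a₁ ^ (L + 1) • (f₂ - f₁)‖ ≤ q ^ (L + 1) * ‖f₂ - f₁‖ :=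
    (norm_smul_le _ _).trans (by gcongr; exact norm_pow_succ_le_of_norm_le ha₁ L)
  have htriangle : ‖f₂ - f₁‖ ≤ ‖S‖ + ‖(a₂ ^ (L + 1) - a₁ ^ (L + 1)) • f₂‖
      + ‖a₁ ^ (L + 1) • (f₂ - f₁)‖ :=
    (congrArg norm (sub_eq_sum_of_eq_add_smul h₁ h₂ (L + 1))).trans_le norm_add₃_le
  linarith

theorem fixed_point_difference_estimate_general (hq : q < 1) (ha₁ : ‖a₁‖ ≤ q) (ha₂ : ‖a₂‖ ≤ q)
    (h₁ : f₁ = g + a₁ • f₁) (h₂ : f₂ = g + a₂ • f₂) (L : ℕ) :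
    ‖f₂ - f₁‖ ≤ (L + 1) * ((1 - q)⁻¹ * q ^ L) * ‖a₂ - a₁‖ * ‖f₂‖
      + (1 - q)⁻¹ * ‖∑ l ∈ range (L + 1), (a₂ ^ l - a₁ ^ l) • g‖ := by
  have hpow : q ^ (L + 1) ≤ q :=
    pow_le_of_le_one ((norm_nonneg a₁).trans ha₁) hq.le L.succ_ne_zero
  calc ‖f₂ - f₁‖
      ≤ (1 - q)⁻¹ * ((L + 1) * q ^ L * ‖a₂ - a₁‖ * ‖f₂‖
          + ‖∑ l ∈ range (L + 1), (a₂ ^ l - a₁ ^ l) • g‖) := by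
        rw [le_inv_mul_iff₀ (sub_pos.mpr hq)]
        refine le_trans ?_ (one_sub_pow_mul_norm_sub_le_of_eq_add_smul ha₁ ha₂ h₁ h₂ L)
        gcongr
    _ = _ := by ring

end FixedPoint

/-- If `‖K₁‖ ≤ 1/2`, `‖K₂‖ ≤ 1/2` and `f_j = g + K_j f_j` for `j = 1, 2`, then for every
`L ∈ ℕ`, `‖f₂ − f₁‖ ≤ (L+1) · 2^{1−L} · ‖K₂ − K₁‖ · ‖f₂‖ + 2 ‖Σ_{l=0}^{L} (K₂^l − K₁^l) g‖`. -/
theorem fixed_point_difference_estimate {𝕜 : Type*} [RCLike 𝕜] {X : Type*}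
    [NormedAddCommGroup X] [NormedSpace 𝕜 X]
    (K₁ K₂ : X →L[𝕜] X) (hK₁ : ‖K₁‖ ≤ 1 / 2) (hK₂ : ‖K₂‖ ≤ 1 / 2)
    (g f₁ f₂ : X) (h₁ : f₁ = g + K₁ f₁) (h₂ : f₂ = g + K₂ f₂) (L : ℕ) :
    ‖f₂ - f₁‖ ≤ ((L : ℝ) + 1) * (2 : ℝ) ^ ((1 : ℤ) - (L : ℤ)) * ‖K₂ - K₁‖ * ‖f₂‖
      + 2 * ‖∑ l ∈ Finset.range (L + 1), (K₂ ^ l - K₁ ^ l) g‖ := by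
  have h := fixed_point_difference_estimate_general (q := 1 / 2) (by norm_num) hK₁ hK₂ h₁ h₂ L
  rwa [(by norm_num : (1 - 1 / 2 : ℝ)⁻¹ = 2), one_div_pow, mul_one_div,
    ← zpow_one_sub_natCast₀ two_ne_zero] at h
end

section
/- Let (X, d) be a metric space, let W ⊆ X, and let A : X → X be a map whose range is contained in W and which satisfies: d(A x, A y) ≤ (13/8) d(x, y) for all x, y ∈ X, and d(A x, A y) ≤ (7/8) d(x, y) for all x, y ∈ W. Let q* ∈ X be a fixed point of A (A q* = q*), and let q̄ ∈ X, w ∈ W, ε ≥ 0, η ≥ 0 satisfy d(w, q̄) ≤ ε and d(A q̄, w) ≤ η. Then d(q*, w) ≤ 13 ε + 8 η, and consequently d(q*, q̄) ≤ 14 ε + 8 η. (This is the abstract content of Step 4 of the proof of the paper's Theorem 4.1, quantifying stability of the reconstructed potential with respect to mismodeling error ε and noise level η; there w = P_{W_R}(q̄) is the projection of the true potential onto the a priori class.) -/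
/-!
`A` contracts only on `W`, so the contraction is applied to `q*` and `w`, never to `q̄`: it bounds
`d(q*, w)` by the residual `d(A w, w)` divided by one minus the contraction constant. The possibly
expanding global Lipschitz bound is spent just once, to pass from `A w` to `A q̄` in the residual.
-/

section

open Function
open scoped NNReal

variable {X : Type*} [PseudoMetricSpace X] {W : Set X} {A : X → X} {K L : ℝ≥0} {p x y : X}

theorem dist_le_div_of_isFixedPt_of_lipschitzOnWith (hA : LipschitzOnWith K A W) (hK : K < 1)
    (hfix : IsFixedPt A p) (hp : p ∈ W) (hx : x ∈ W) :
    dist p x ≤ dist (A x) x / (1 - K) := by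
  have hK_pos : (0 : ℝ) < 1 - K := sub_pos.mpr (by exact_mod_cast hK)
  have hdist : dist p x ≤ K * dist p x + dist (A x) x :=
    calc
      dist p x ≤ dist p (A x) + dist (A x) x := dist_triangle _ _ _
      _ = dist (A p) (A x) + dist (A x) x := by rw [hfix.eq]
      _ ≤ K * dist p x + dist (A x) x := by gcongr; exact hA.dist_le_mul p hp x hx
  rw [le_div_iff₀ hK_pos]
  linarith

theorem dist_map_self_le_of_lipschitzWith (hA : LipschitzWith L A) :
    dist (A x) x ≤ L * dist x y + dist (A y) x :=
  calc
    dist (A x) x ≤ dist (A x) (A y) + dist (A y) x := dist_triangle _ _ _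
    _ ≤ L * dist x y + dist (A y) x := by gcongr; exact hA.dist_le_mul x y

theorem fixed_point_stability_general {ε η : ℝ} (hL : LipschitzWith L A)
    (hA : LipschitzOnWith K A W) (hK : K < 1) (hfix : IsFixedPt A p) (hp : p ∈ W)
    (hx : x ∈ W) (hxy : dist x y ≤ ε) (hAy : dist (A y) x ≤ η) :
    dist p x ≤ (L * ε + η) / (1 - K) ∧ dist p y ≤ (L * ε + η) / (1 - K) + ε := by
  have hK_nonneg : (0 : ℝ) ≤ 1 - K := sub_nonneg.mpr (by exact_mod_cast hK.le)
  have hpx : dist p x ≤ (L * ε + η) / (1 - K) :=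
    calc
      dist p x ≤ dist (A x) x / (1 - K) :=
        dist_le_div_of_isFixedPt_of_lipschitzOnWith hA hK hfix hp hx
      _ ≤ (L * dist x y + dist (A y) x) / (1 - K) := by
        gcongr
        exact dist_map_self_le_of_lipschitzWith hL
      _ ≤ (L * ε + η) / (1 - K) := by gcongr
  exact ⟨hpx, (dist_triangle p x y).trans (add_le_add hpx hxy)⟩

end

/-- Abstract stability of the fixed point of the reconstruction map: if `A : X → X` has
range in `W`, is `13/8`-Lipschitz on `X` and `7/8`-Lipschitz on `W`, `q*` is a fixed point
of `A`, `w ∈ W`, `d(w, q̄) ≤ ε` and `d(A q̄, w) ≤ η`, then `d(q*, w) ≤ 13ε + 8η` and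
`d(q*, q̄) ≤ 14ε + 8η`. -/
theorem fixed_point_stability {X : Type*} [MetricSpace X] (W : Set X) (A : X → X)
    (hrange : ∀ x : X, A x ∈ W)
    (hLip : ∀ x y : X, dist (A x) (A y) ≤ (13 / 8) * dist x y)
    (hContr : ∀ x ∈ W, ∀ y ∈ W, dist (A x) (A y) ≤ (7 / 8) * dist x y)
    (qstar qbar w : X) (hfix : A qstar = qstar) (hw : w ∈ W)
    (ε η : ℝ) (hε : 0 ≤ ε) (hη : 0 ≤ η)
    (h1 : dist w qbar ≤ ε) (h2 : dist (A qbar) w ≤ η) :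
    dist qstar w ≤ 13 * ε + 8 * η ∧ dist qstar qbar ≤ 14 * ε + 8 * η := by
  convert fixed_point_stability_general (L := 13 / 8) (K := 7 / 8) (.of_dist_le_mul hLip)
    (.of_dist_le_mul hContr) (by norm_num [div_lt_one]) hfix (hfix ▸ hrange qstar) hw h1 h2
    using 2 <;> (push_cast; ring)
end
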